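/- Let α > 0 and assume M = max_{1 ≤ j ≤ N} M_j < ∞, where M_j is the α-branching number of (b̄^j, k̄^j, γ̄^j). Then for every ε > 0: liminf_{k→∞} inf_{R∈𝓡} (1/k) · log Pr_{R,Γ}(S^{α(1+ε)k, k}) ≥ −M(1+ε). -/

import Mathlib

/-!
Change of measure plus a Chernoff bound along the tree of words.

Put `M = max_j M_j` and let `δ > 0`. For every group `j` choose a feasible probability vector `q j`
with `KL (q j) (γ j) < (M + δ) * (q j · k j)`. Since `q j · b j ≥ 1`, feasibility forces
`q j · k j > 0`, so under `q j` both
`b - α (1 + ε / 2) k` and `log (q / γ) - (M + 2 δ) k` have negative mean. Hence for one small `θ > 0`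
(`eventually_sum_mul_exp_le_one`) the exponentials of `θ` times the sums of these weights over a word
are supermartingales under `P_{R,q}`, whatever the rules mapping `R` is.

Read letters until the coverage reaches `k`; it then overshoots by at most a constant. If the
final cost exceeds `α (1 + ε) k`, or the log-likelihood ratio `Λ` of `q` to `γ` exceeds
`(M + 3 δ) k`, one of the two exponentials is exponentially large in `k`. As every letter costs at
least `1`, the first event also covers words that do not stop. So
`h = P_{R,q} * (1 - C₁ * exp (θ φ₁) - C₂ * exp (θ φ₂))`, with `C₁, C₂` exponentially small in `k`,
satisfies `h p ≤ ∑ a, h (p ++ [a])`, is nonpositive at bad terminal words, and at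
the others, which lie in `A^{b,k}`, is at most `P_{R,q} ≤ exp ((M + 3 δ) k) * P_{R,γ}`. Summing over the
tree (`start_le_exp_mul_PrS`) gives `1 - C₁ - C₂ ≤ exp ((M + 3 δ) k) * PrS`, uniformly in `R`.

The bound `PrS ≤ 1` (`A^{b,k}` is prefix-free) is used only to make the `liminf` over `ℝ` meaningful.
-/


open scoped Classical

noncomputable section

namespace RB

/-- The alphabet `𝒳`, given as the disjoint union of the groups `𝒳_j`. -/
abbrev X (N : ℕ) (r : Fin N → ℕ) : Type := (j : Fin N) × Fin (r j)

variable {N : ℕ} {r : Fin N → ℕ}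

/-- the coverage `κ` of a word (`K` is the concatenation of the `k̄ʲ`) -/
def kap (K : (j : Fin N) → Fin (r j) → ℕ) (l : List (X N r)) : ℕ :=
  (l.map fun a => K a.1 a.2).sum

/-- the cost `μ` of a word (`B` is the concatenation of the `b̄ʲ`) -/
def mu (B : (j : Fin N) → Fin (r j) → ℕ) (l : List (X N r)) : ℕ :=
  (l.map fun a => B a.1 a.2).sum

/-- `P_{R,Υ}(ā) = ∏_ℓ [Υ_{a_ℓ}` if `a_ℓ ∈ 𝒳_{R(a_1,…,a_{ℓ-1})}`, else `0]` -/
def wordP (R : List (X N r) → Fin N) (Υ : (j : Fin N) → Fin (r j) → ℝ)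
    (l : List (X N r)) : ℝ :=
  ∏ ℓ : Fin l.length,
    if (l.get ℓ).1 = R (l.take ℓ.1) then Υ (l.get ℓ).1 (l.get ℓ).2 else 0

/-- the set of words `A^{b,k}` -/
def ASet (B K : (j : Fin N) → Fin (r j) → ℕ) (bb kb : ℝ) : Set (List (X N r)) :=
  if bb < 0 then ∅
  else if kb ≤ 0 then {[]}
  else {l | l ≠ [] ∧ (mu B l : ℝ) ≤ bb ∧ kb ≤ (kap K l : ℝ) ∧ (kap K l.dropLast : ℝ) < kb}

/-- `Pr_{R,Υ}(S^{b,k}) = Σ_{ā ∈ A^{b,k}} P_{R,Υ}(ā)` (the set `A^{b,k}` is finite,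
so the `tsum` is the finite sum) -/
def PrS (B K : (j : Fin N) → Fin (r j) → ℕ) (R : List (X N r) → Fin N)
    (Υ : (j : Fin N) → Fin (r j) → ℝ) (bb kb : ℝ) : ℝ :=
  ∑' l : ASet B K bb kb, wordP R Υ l.1

/-- `k`-consistent rules mappings: whenever `κ(ā) < k`, every `i ∈ 𝒳_{R(ā)}`
satisfies `K_i ≤ k - κ(ā)`. -/
def Consistent (K : (j : Fin N) → Fin (r j) → ℕ) (k : ℕ)
    (R : List (X N r) → Fin N) : Prop :=
  ∀ l : List (X N r), kap K l < k → ∀ i : Fin (r (R l)), K (R l) i + kap K l ≤ k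

/-- Kullback-Leibler divergence -/
def KL {ρ : ℕ} (q g : Fin ρ → ℝ) : ℝ := ∑ i, q i * Real.log (q i / g i)

/-- the set of values of the `α`-branching optimization problem -/
def BrSet (α : ℝ) {ρ : ℕ} (bv kv : Fin ρ → ℕ) (g : Fin ρ → ℝ) : Set ℝ :=
  {x | ∃ q : Fin ρ → ℝ, (∀ i, 0 ≤ q i) ∧ (∑ i, q i = 1) ∧
        (∑ i, q i * (bv i : ℝ)) ≤ α * ∑ i, q i * (kv i : ℝ) ∧
        x = KL q g / ∑ i, q i * (kv i : ℝ)}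

end RB

namespace RB

variable {N : ℕ} {r : Fin N → ℕ}

/-! ### Word probabilities and their sums over the tree of words -/

lemma wordP_nil (R : List (X N r) → Fin N) (Υ : (j : Fin N) → Fin (r j) → ℝ) :
    wordP R Υ [] = 1 := by
  simp [wordP]

lemma wordP_concat (R : List (X N r) → Fin N) (Υ : (j : Fin N) → Fin (r j) → ℝ)
    (p : List (X N r)) (a : X N r) :
    wordP R Υ (p ++ [a]) = wordP R Υ p * if a.1 = R p then Υ a.1 a.2 else 0 := by
  have h : (p ++ [a]).length = p.length + 1 := by simp
  unfold wordP
  rw [← Equiv.prod_comp (finCongr h.symm), Fin.prod_univ_castSucc]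
  congr 1
  · refine Finset.prod_congr rfl fun i _ => ?_
    have h1 : (p ++ [a]).get ((finCongr h.symm) i.castSucc) = p.get i := by
      simp
    have h2 : List.take ((finCongr h.symm) i.castSucc).1 (p ++ [a]) = p.take i.1 := by
      simp [List.take_append_of_le_length i.2.le]
    rw [h1, h2]
  · have h1 : (p ++ [a]).get ((finCongr h.symm) (Fin.last _)) = a := by
      simp
    have h2 : List.take ((finCongr h.symm) (Fin.last p.length)).1 (p ++ [a]) = p := by
      simp
    rw [h1, h2]

lemma wordP_nonneg (R : List (X N r) → Fin N) {Υ : (j : Fin N) → Fin (r j) → ℝ}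
    (h : ∀ j i, 0 ≤ Υ j i) (l : List (X N r)) : 0 ≤ wordP R Υ l := by
  unfold wordP
  refine Finset.prod_nonneg fun i _ => ?_
  split_ifs
  · exact h _ _
  · exact le_rfl

/-- Summing over all one-letter extensions of `p` only sees the group selected by `R p`. -/
lemma sum_wordP_concat_mul (R : List (X N r) → Fin N) (Υ : (j : Fin N) → Fin (r j) → ℝ)
    (p : List (X N r)) (f : X N r → ℝ) :
    ∑ a, wordP R Υ (p ++ [a]) * f a = wordP R Υ p * ∑ i, Υ (R p) i * f ⟨R p, i⟩ := by
  rw [Fintype.sum_sigma, Finset.sum_eq_single (R p)]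
  · rw [Finset.mul_sum]
    refine Finset.sum_congr rfl fun i _ => ?_
    rw [wordP_concat, if_pos rfl, mul_assoc]
  · intro j _ hj
    refine Finset.sum_eq_zero fun i _ => ?_
    rw [wordP_concat, if_neg hj]
    simp
  · simp

/-- The value `P l` summed over the words `l` of `A` that extend `p`, `p` included. -/
def massBelow (A : Finset (List (X N r))) (P : List (X N r) → ℝ) (p : List (X N r)) : ℝ :=
  ∑ l ∈ A, if p <+: l then P l else 0

/-- A word of `A` extending `p ∉ A` extends exactly one child of `p`. -/
lemma massBelow_step (A : Finset (List (X N r))) (P : List (X N r) → ℝ) {p : List (X N r)}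
    (hp : p ∉ A) : massBelow A P p = ∑ a, massBelow A P (p ++ [a]) := by
  unfold massBelow
  rw [Finset.sum_comm]
  refine Finset.sum_congr rfl fun l hl => ?_
  by_cases h : p <+: l
  · obtain ⟨t, rfl⟩ := h
    cases t with
    | nil => simp at hl; exact absurd hl hp
    | cons b t =>
      simp [List.prefix_append_right_inj, List.cons_prefix_cons]
  · rw [if_neg h, Finset.sum_eq_zero]
    intro a _
    rw [if_neg]
    exact fun h' => h ((List.prefix_append p [a]).trans h')

lemma kap_concat (K : (j : Fin N) → Fin (r j) → ℕ) (p : List (X N r)) (a : X N r) :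
    kap K (p ++ [a]) = kap K p + K a.1 a.2 := by
  simp [kap]

lemma kap_append (K : (j : Fin N) → Fin (r j) → ℕ) (p t : List (X N r)) :
    kap K (p ++ t) = kap K p + kap K t := by
  simp [kap]

lemma length_le_mu {B : (j : Fin N) → Fin (r j) → ℕ} (hB : ∀ j i, 1 ≤ B j i)
    (l : List (X N r)) : l.length ≤ mu B l := by
  induction l with
  | nil => simp
  | cons a t ih =>
    have := hB a.1 a.2
    simp only [mu, List.length_cons, List.map_cons, List.sum_cons] at ih ⊢
    omega

lemma mem_ASet {B K : (j : Fin N) → Fin (r j) → ℕ} {b k : ℝ} (hb : 0 ≤ b) (hk : 0 < k)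
    {l : List (X N r)} :
    l ∈ ASet B K b k ↔ l ≠ [] ∧ (mu B l : ℝ) ≤ b ∧ k ≤ (kap K l : ℝ) ∧
      (kap K l.dropLast : ℝ) < k := by
  unfold ASet
  rw [if_neg (not_lt.2 hb), if_neg (not_le.2 hk)]
  rfl

lemma ASet_finite {B K : (j : Fin N) → Fin (r j) → ℕ} (hB : ∀ j i, 1 ≤ B j i) {b k : ℝ}
    (hb : 0 ≤ b) (hk : 0 < k) : (ASet (r := r) B K b k).Finite := by
  refine (List.finite_length_le (X N r) ⌊b⌋₊).subset fun l hl => ?_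
  have h := ((mem_ASet hb hk).1 hl).2.1
  exact (length_le_mu hB l).trans (Nat.le_floor h)

lemma PrS_eq_massBelow {B K : (j : Fin N) → Fin (r j) → ℕ} {b k : ℝ}
    (hfin : (ASet (r := r) B K b k).Finite) (R : List (X N r) → Fin N)
    (Υ : (j : Fin N) → Fin (r j) → ℝ) :
    PrS B K R Υ b k = massBelow hfin.toFinset (wordP R Υ) [] := by
  unfold PrS massBelow
  simp only [List.nil_prefix, if_true]
  have := Finset.tsum_subtype' hfin.toFinset (wordP R Υ)
  rw [← this, Set.Finite.coe_toFinset]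

/-- `A^{b,k}` is prefix-free: a word of coverage at least `k` has no proper extension in it. -/
lemma eq_of_prefix_mem {B K : (j : Fin N) → Fin (r j) → ℕ} {b k : ℝ} (hb : 0 ≤ b) (hk : 0 < k)
    {p l : List (X N r)} (hp : k ≤ (kap K p : ℝ)) (hpl : p <+: l) (hl : l ∈ ASet B K b k) :
    p = l := by
  obtain ⟨t, rfl⟩ := hpl
  by_cases ht : t = []
  · simp [ht]
  · have h := ((mem_ASet hb hk).1 hl).2.2.2
    rw [List.dropLast_append_of_ne_nil ht, kap_append] at h
    push_cast at h
    have : (0 : ℝ) ≤ kap K t.dropLast := Nat.cast_nonneg _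
    linarith

lemma PrS_le_one {B K : (j : Fin N) → Fin (r j) → ℕ} (hB : ∀ j i, 1 ≤ B j i) {b k : ℝ}
    (hb : 0 ≤ b) (hk : 0 < k) (R : List (X N r) → Fin N) {Υ : (j : Fin N) → Fin (r j) → ℝ}
    (hΥ : ∀ j i, 0 ≤ Υ j i) (hsum : ∀ j, ∑ i, Υ j i = 1) : PrS B K R Υ b k ≤ 1 := by
  have hfin := ASet_finite (K := K) hB hb hk
  rw [PrS_eq_massBelow hfin]
  have key : ∀ (n : ℕ) (p : List (X N r)), b < n + p.length →
      massBelow hfin.toFinset (wordP R Υ) p ≤ wordP R Υ p := by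
    intro n
    induction n with
    | zero =>
      intro p hp
      refine le_trans (le_of_eq (Finset.sum_eq_zero fun l hl => if_neg fun hpl => ?_))
        (wordP_nonneg R hΥ p)
      have h1 := ((mem_ASet hb hk).1 (hfin.mem_toFinset.1 hl)).2.1
      have h2 : (p.length : ℝ) ≤ mu B l := by
        exact_mod_cast hpl.length_le.trans (length_le_mu hB l)
      push_cast at hp
      linarith
    | succ n ih =>
      intro p hp
      by_cases hkp : k ≤ (kap K p : ℝ)
      · unfold massBelow
        calc _ ≤ ∑ l ∈ hfin.toFinset, if l = p then wordP R Υ p else 0 := by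
              refine Finset.sum_le_sum fun l hl => ?_
              by_cases hpl : p <+: l
              · have := eq_of_prefix_mem hb hk hkp hpl (hfin.mem_toFinset.1 hl)
                subst this
                simp
              · rw [if_neg hpl]
                split_ifs
                exacts [wordP_nonneg R hΥ p, le_rfl]
          _ ≤ _ := by
              rw [Finset.sum_ite_eq']
              split_ifs
              exacts [le_rfl, wordP_nonneg R hΥ p]
      · have hnot : p ∉ hfin.toFinset := fun h =>
          hkp ((mem_ASet hb hk).1 (hfin.mem_toFinset.1 h)).2.2.1
        rw [massBelow_step _ _ hnot]
        calc _ ≤ ∑ a, wordP R Υ (p ++ [a]) * 1 := by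
              refine Finset.sum_le_sum fun a _ => ?_
              rw [mul_one]
              apply ih
              push_cast at hp
              simp only [List.length_append, List.length_singleton]
              push_cast
              linarith
          _ = _ := by
              rw [sum_wordP_concat_mul]
              simp [hsum]
  obtain ⟨n, hn⟩ := exists_nat_gt b
  simpa [wordP_nil] using key n [] (by simpa using hn)

/-! ### Change of measure and the submartingale bound -/

/-- Additive extension of a real weight on letters to words. -/
def weight (c : X N r → ℝ) (l : List (X N r)) : ℝ := (l.map c).sum

lemma weight_concat (c : X N r → ℝ) (p : List (X N r)) (a : X N r) :
    weight c (p ++ [a]) = weight c p + c a := by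
  simp [weight]

/-- Change of measure; only an inequality because `Real.log 0 = 0` where `q` vanishes. -/
lemma wordP_le_exp_mul (R : List (X N r) → Fin N) {q γ : (j : Fin N) → Fin (r j) → ℝ}
    (hq : ∀ j i, 0 ≤ q j i) (hγ : ∀ j i, 0 < γ j i) (l : List (X N r)) :
    wordP R q l ≤
      Real.exp (weight (fun a => Real.log (q a.1 a.2 / γ a.1 a.2)) l) * wordP R γ l := by
  induction l using List.reverseRecOn with
  | nil => simp [wordP_nil, weight]
  | append_singleton p a ih =>
    rw [wordP_concat, wordP_concat, weight_concat, Real.exp_add]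
    split_ifs with h
    · have h1 : q a.1 a.2 ≤ Real.exp (Real.log (q a.1 a.2 / γ a.1 a.2)) * γ a.1 a.2 := by
        rcases (hq a.1 a.2).eq_or_lt with h0 | h0
        · rw [← h0]
          have := hγ a.1 a.2
          positivity
        · rw [Real.exp_log (div_pos h0 (hγ _ _)), div_mul_cancel₀ _ (hγ _ _).ne']
      calc _ ≤ _ := mul_le_mul ih h1 (hq _ _)
            (mul_nonneg (Real.exp_pos _).le (wordP_nonneg R (fun j i => (hγ j i).le) p))
        _ = _ := by ring
    · simp

lemma weight_cost (B K : (j : Fin N) → Fin (r j) → ℕ) (s : ℝ) (l : List (X N r)) :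
    weight (fun a => (B a.1 a.2 : ℝ) - s * K a.1 a.2) l = mu B l - s * kap K l := by
  induction l using List.reverseRecOn with
  | nil => simp [weight, mu, kap]
  | append_singleton p a ih =>
    rw [weight_concat, ih, kap_concat]
    simp [mu]
    ring

lemma weight_sub (f : X N r → ℝ) (K : (j : Fin N) → Fin (r j) → ℕ) (s : ℝ) (l : List (X N r)) :
    weight (fun a => f a - s * K a.1 a.2) l = weight f l - s * kap K l := by
  induction l using List.reverseRecOn with
  | nil => simp [weight, kap]
  | append_singleton p a ih =>
    rw [weight_concat, ih, kap_concat, weight_concat]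
    push_cast
    ring

/-- The tree argument: the value at the root of the submartingale
`P_{R,q} * (1 - C₁ exp (θ φ₁) - C₂ exp (θ φ₂))` bounds `PrS` from below, up to the likelihood ratio
`exp c`. Here `Km` bounds the coverage of a letter, hence the overshoot at the stopping time. -/
lemma start_le_exp_mul_PrS {B K : (j : Fin N) → Fin (r j) → ℕ} (hB : ∀ j i, 1 ≤ B j i)
    {Km : ℕ} (hKm : ∀ j i, K j i ≤ Km) {q γ : (j : Fin N) → Fin (r j) → ℝ}
    (hq : ∀ j i, 0 ≤ q j i) (hqs : ∀ j, ∑ i, q j i = 1) (hγ : ∀ j i, 0 < γ j i)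
    {s t θ : ℝ} (hs : 0 ≤ s) (ht : 0 ≤ t) (hθ : 0 < θ)
    (h1 : ∀ j, ∑ i, q j i * Real.exp (θ * (B j i - s * K j i)) ≤ 1)
    (h2 : ∀ j, ∑ i, q j i * Real.exp (θ * (Real.log (q j i / γ j i) - t * K j i)) ≤ 1)
    {b k c : ℝ} (hb : 0 ≤ b) (hk : 0 < k) (R : List (X N r) → Fin N) :
    1 - Real.exp (-θ * (b - s * (k + Km))) - Real.exp (-θ * (c - t * (k + Km))) ≤
      Real.exp c * PrS B K R γ b k := by
  have hfin := ASet_finite (K := K) hB hb hk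
  rw [PrS_eq_massBelow hfin]
  set Z := massBelow hfin.toFinset (wordP R γ) with hZ
  have hZ0 : ∀ p, 0 ≤ Z p := fun p => Finset.sum_nonneg fun l _ => by
    split_ifs
    exacts [wordP_nonneg R (fun j i => (hγ j i).le) l, le_rfl]
  set C1 := Real.exp (-θ * (b - s * (k + Km))) with hC1
  set C2 := Real.exp (-θ * (c - t * (k + Km))) with hC2
  set φ1 : List (X N r) → ℝ := weight (fun a => (B a.1 a.2 : ℝ) - s * K a.1 a.2) with hφ1
  set φ2 : List (X N r) → ℝ :=
    weight (fun a => Real.log (q a.1 a.2 / γ a.1 a.2) - t * K a.1 a.2) with hφ2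
  set h : List (X N r) → ℝ := fun p =>
    wordP R q p * (1 - C1 * Real.exp (θ * φ1 p) - C2 * Real.exp (θ * φ2 p)) with hh
  have hC1p : 0 < C1 := Real.exp_pos _
  have hC2p : 0 < C2 := Real.exp_pos _
  have hP := wordP_nonneg R hq
  have hstep : ∀ p, h p ≤ ∑ a, h (p ++ [a]) := by
    intro p
    have e : ∑ a, h (p ++ [a]) = wordP R q p * ∑ i, q (R p) i *
        (1 - C1 * Real.exp (θ * φ1 p) * Real.exp (θ * (B (R p) i - s * K (R p) i))
          - C2 * Real.exp (θ * φ2 p) *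
            Real.exp (θ * (Real.log (q (R p) i / γ (R p) i) - t * K (R p) i))) := by
      rw [← sum_wordP_concat_mul R q p (fun a =>
        (1 - C1 * Real.exp (θ * φ1 p) * Real.exp (θ * (B a.1 a.2 - s * K a.1 a.2))
          - C2 * Real.exp (θ * φ2 p) *
            Real.exp (θ * (Real.log (q a.1 a.2 / γ a.1 a.2) - t * K a.1 a.2))))]
      refine Finset.sum_congr rfl fun a _ => ?_
      simp only [hh, hφ1, hφ2, weight_concat, mul_add, Real.exp_add]
      ring
    rw [e]
    refine mul_le_mul_of_nonneg_left ?_ (hP p)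
    have e2 : ∑ i, q (R p) i *
        (1 - C1 * Real.exp (θ * φ1 p) * Real.exp (θ * (B (R p) i - s * K (R p) i))
          - C2 * Real.exp (θ * φ2 p) *
            Real.exp (θ * (Real.log (q (R p) i / γ (R p) i) - t * K (R p) i))) =
        ∑ i, q (R p) i - C1 * Real.exp (θ * φ1 p) *
          ∑ i, q (R p) i * Real.exp (θ * (B (R p) i - s * K (R p) i)) -
          C2 * Real.exp (θ * φ2 p) *
          ∑ i, q (R p) i *
            Real.exp (θ * (Real.log (q (R p) i / γ (R p) i) - t * K (R p) i)) := by
      rw [Finset.mul_sum, Finset.mul_sum, ← Finset.sum_sub_distrib, ← Finset.sum_sub_distrib]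
      refine Finset.sum_congr rfl fun i _ => ?_
      ring
    rw [e2, hqs]
    have a1 := mul_le_mul_of_nonneg_left (h1 (R p))
      (mul_pos hC1p (Real.exp_pos (θ * φ1 p))).le
    have a2 := mul_le_mul_of_nonneg_left (h2 (R p))
      (mul_pos hC2p (Real.exp_pos (θ * φ2 p))).le
    linarith
  -- words over budget; this also covers long unstopped words, whose cost is at least their length
  have hbad1 : ∀ p, (kap K p : ℝ) ≤ k + Km → b < mu B p → h p ≤ 0 := by
    intro p hkp hmu
    refine mul_nonpos_of_nonneg_of_nonpos (hP p) ?_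
    have : 1 ≤ C1 * Real.exp (θ * φ1 p) := by
      rw [hC1, ← Real.exp_add, Real.one_le_exp_iff, hφ1, weight_cost]
      have := mul_le_mul_of_nonneg_left hkp hs
      have h3 : 0 ≤ (mu B p - s * kap K p) - (b - s * (k + Km)) := by linarith
      nlinarith [mul_nonneg hθ.le h3]
    have := mul_pos hC2p (Real.exp_pos (θ * φ2 p))
    linarith
  -- `n` is fuel: a word with no fuel left is longer than `b`, hence over budget
  have key : ∀ (n : ℕ) (p : List (X N r)), b < n + p.length → (kap K p : ℝ) ≤ k + Km →
      (k ≤ (kap K p : ℝ) → (kap K p.dropLast : ℝ) < k) → h p ≤ Real.exp c * Z p := by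
    intro n
    induction n with
    | zero =>
      intro p hn hkp _
      refine (hbad1 p hkp ?_).trans (mul_nonneg (Real.exp_pos c).le (hZ0 p))
      have : (p.length : ℝ) ≤ mu B p := by exact_mod_cast length_le_mu hB p
      push_cast at hn
      linarith
    | succ n ih =>
      intro p hn hkp hdrop
      by_cases hmu : b < mu B p
      · exact (hbad1 p hkp hmu).trans (mul_nonneg (Real.exp_pos c).le (hZ0 p))
      by_cases hkk : k ≤ (kap K p : ℝ)
      · by_cases hL : c < weight (fun a => Real.log (q a.1 a.2 / γ a.1 a.2)) p
        · refine le_trans ?_ (mul_nonneg (Real.exp_pos c).le (hZ0 p))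
          refine mul_nonpos_of_nonneg_of_nonpos (hP p) ?_
          have : 1 ≤ C2 * Real.exp (θ * φ2 p) := by
            rw [hC2, ← Real.exp_add, Real.one_le_exp_iff, hφ2, weight_sub]
            have := mul_le_mul_of_nonneg_left hkp ht
            have h3 : 0 ≤ (weight (fun a => Real.log (q a.1 a.2 / γ a.1 a.2)) p
              - t * kap K p) - (c - t * (k + Km)) := by linarith
            nlinarith [mul_nonneg hθ.le h3]
          have := mul_pos hC1p (Real.exp_pos (θ * φ1 p))
          linarith
        · have hne : p ≠ [] := by
            rintro rfl
            simp [kap] at hkk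
            linarith
          have hmem : p ∈ hfin.toFinset :=
            hfin.mem_toFinset.2 ((mem_ASet hb hk).2 ⟨hne, not_lt.1 hmu, hkk, hdrop hkk⟩)
          have hZp : wordP R γ p ≤ Z p := by
            have := Finset.single_le_sum
              (f := fun l => if p <+: l then wordP R γ l else 0) (fun l _ => by
                split_ifs
                exacts [wordP_nonneg R (fun j i => (hγ j i).le) l, le_rfl]) hmem
            simpa [hZ, massBelow] using this
          calc h p ≤ wordP R q p * 1 := by
                refine mul_le_mul_of_nonneg_left ?_ (hP p)
                have := mul_pos hC1p (Real.exp_pos (θ * φ1 p))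
                have := mul_pos hC2p (Real.exp_pos (θ * φ2 p))
                linarith
            _ ≤ _ := by rw [mul_one]; exact wordP_le_exp_mul R hq hγ p
            _ ≤ Real.exp c * Z p :=
                mul_le_mul (Real.exp_le_exp.2 (not_lt.1 hL)) hZp
                  (wordP_nonneg R (fun j i => (hγ j i).le) p) (Real.exp_pos c).le
      · have hnot : p ∉ hfin.toFinset := fun h' =>
          hkk ((mem_ASet hb hk).1 (hfin.mem_toFinset.1 h')).2.2.1
        refine (hstep p).trans ?_
        rw [hZ, massBelow_step _ _ hnot, Finset.mul_sum]
        refine Finset.sum_le_sum fun a _ => ih _ ?_ ?_ ?_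
        · push_cast at hn
          simp only [List.length_append, List.length_singleton]
          push_cast
          linarith
        · rw [kap_concat]
          have : (K a.1 a.2 : ℝ) ≤ Km := by exact_mod_cast hKm a.1 a.2
          push_cast
          linarith
        · intro _
          simpa using not_le.1 hkk
  obtain ⟨n, hn⟩ := exists_nat_gt b
  have := key n [] (by simpa using hn)
    (by simp only [kap, List.map_nil, List.sum_nil, Nat.cast_zero]; positivity)
    (by simpa [kap] using fun _ => hk)
  simpa [hh, wordP_nil, hφ1, hφ2, weight] using this

/-! ### Single-letter estimates -/

/-- A finite distribution with negative mean has moment generating function at most `1` just to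
the right of `0`. -/
lemma eventually_sum_mul_exp_le_one {ρ : ℕ} {q x : Fin ρ → ℝ} (hqs : ∑ i, q i = 1)
    (hx : ∑ i, q i * x i < 0) :
    ∀ᶠ θ in nhdsWithin (0 : ℝ) (Set.Ioi 0), ∑ i, q i * Real.exp (θ * x i) ≤ 1 := by
  have hd : HasDerivAt (fun θ : ℝ => ∑ i, q i * Real.exp (θ * x i)) (∑ i, q i * x i) 0 := by
    refine HasDerivAt.fun_sum fun i _ => ?_
    have := (((hasDerivAt_id (0 : ℝ)).mul_const (x i)).exp).const_mul (q i)
    simpa using this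
  have h := (hasDerivAt_iff_tendsto_slope_zero.1 hd).eventually (gt_mem_nhds hx)
  have hle : nhdsWithin (0 : ℝ) (Set.Ioi 0) ≤ nhdsWithin 0 {0}ᶜ :=
    nhdsWithin_mono _ fun y hy => ne_of_gt hy
  filter_upwards [hle h, self_mem_nhdsWithin] with θ hθ hpos
  have hpos' : (0 : ℝ) < θ := hpos
  simp only [zero_add, zero_mul, Real.exp_zero, mul_one, hqs, smul_eq_mul] at hθ
  by_contra hcon
  push Not at hcon
  have := mul_pos (inv_pos.2 hpos') (sub_pos.2 hcon)
  linarith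

/-- The Gibbs inequality. -/
lemma KL_nonneg {ρ : ℕ} {q g : Fin ρ → ℝ} (hq : ∀ i, 0 ≤ q i) (hg : ∀ i, 0 < g i)
    (hqs : ∑ i, q i = 1) (hgs : ∑ i, g i = 1) : 0 ≤ KL q g := by
  have : ∑ i, (q i - g i) ≤ KL q g := by
    refine Finset.sum_le_sum fun i _ => ?_
    rcases (hq i).eq_or_lt with h | h
    · rw [← h]
      have := hg i
      simp only [zero_mul]
      linarith
    · have h1 := Real.one_sub_inv_le_log_of_pos (div_pos h (hg i))
      have h2 := mul_le_mul_of_nonneg_left h1 h.le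
      have h3 : q i * (1 - (q i / g i)⁻¹) = q i - g i := by
        have := hg i
        field_simp
      linarith
  rw [Finset.sum_sub_distrib, hqs, hgs] at this
  linarith

/-- Feasible vectors have positive mean coverage, because every cost is at least `1`. -/
lemma mean_coverage_pos {ρ : ℕ} {α : ℝ} (hα : 0 < α) {bv kv : Fin ρ → ℕ}
    (hb : ∀ i, 1 ≤ bv i) {q : Fin ρ → ℝ} (hq : ∀ i, 0 ≤ q i) (hqs : ∑ i, q i = 1)
    (hf : (∑ i, q i * (bv i : ℝ)) ≤ α * ∑ i, q i * (kv i : ℝ)) :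
    0 < ∑ i, q i * (kv i : ℝ) := by
  have h1 : ∑ i, q i ≤ ∑ i, q i * (bv i : ℝ) := by
    refine Finset.sum_le_sum fun i _ => ?_
    have : (1 : ℝ) ≤ bv i := by exact_mod_cast hb i
    nlinarith [hq i]
  by_contra hcon
  have := mul_nonpos_of_nonneg_of_nonpos hα.le (not_lt.1 hcon)
  linarith

end RB

/-- Lemma 7, `weak_lower_bound`:  for every `ε > 0`,
`liminf_{k→∞} inf_{R∈𝓡} (1/k) log Pr_{R,Γ}(S^{α(1+ε)k, k}) ≥ -M(1+ε)`, where
`M = ⨆ j, M_j` is the largest `α`-branching number (finite by `hfeas`). -/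
theorem stmt_9
    (N : ℕ) (hN : 1 ≤ N) (r : Fin N → ℕ) (hr : ∀ j, 1 ≤ r j)
    (bb kb : (j : Fin N) → Fin (r j) → ℕ)
    (hbb : ∀ j i, 1 ≤ bb j i)
    (γ : (j : Fin N) → Fin (r j) → ℝ)
    (hγpos : ∀ j i, 0 < γ j i) (hγsum : ∀ j, ∑ i, γ j i = 1)
    (α : ℝ) (hα : 0 < α)
    (hfeas : ∀ j, (RB.BrSet α (bb j) (kb j) (γ j)).Nonempty)
    (ε : ℝ) (hε : 0 < ε) :
    -((⨆ j, sInf (RB.BrSet α (bb j) (kb j) (γ j))) * (1 + ε)) ≤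
      Filter.liminf (fun k : ℕ =>
          sInf {x | ∃ R : List (RB.X N r) → Fin N,
            x = Real.log (RB.PrS bb kb R γ (α * (1 + ε) * (k : ℝ)) (k : ℝ)) / (k : ℝ)})
        Filter.atTop := by
  have hBr0 : ∀ j, ∀ x ∈ RB.BrSet α (bb j) (kb j) (γ j), 0 ≤ x := by
    rintro j x ⟨q, hq, hqs, hf, rfl⟩
    exact div_nonneg (RB.KL_nonneg hq (hγpos j) hqs (hγsum j))
      (RB.mean_coverage_pos hα (hbb j) hq hqs hf).le
  set M := ⨆ j, sInf (RB.BrSet α (bb j) (kb j) (γ j)) with hM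
  have hM0 : 0 ≤ M := Real.iSup_nonneg fun j => Real.sInf_nonneg (hBr0 j)
  have hMj : ∀ j, sInf (RB.BrSet α (bb j) (kb j) (γ j)) ≤ M := fun j =>
    le_ciSup (f := fun j => sInf (RB.BrSet α (bb j) (kb j) (γ j)))
      (Set.finite_range _).bddAbove j
  have hN' : Nonempty (List (RB.X N r) → Fin N) := ⟨fun _ => ⟨0, hN⟩⟩
  obtain ⟨Km, hKm⟩ : ∃ Km : ℕ, ∀ j i, kb j i ≤ Km := by
    refine ⟨∑ j, ∑ i, kb j i, fun j i => ?_⟩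
    exact (Finset.single_le_sum (f := fun i => kb j i) (fun _ _ => Nat.zero_le _)
      (Finset.mem_univ i)).trans (Finset.single_le_sum (f := fun j => ∑ i, kb j i)
      (fun _ _ => Nat.zero_le _) (Finset.mem_univ j))
  refine le_of_forall_pos_sub_le fun δ' hδ' => ?_
  obtain ⟨δ, hδ, hδδ⟩ : ∃ δ : ℝ, 0 < δ ∧ 4 * δ = δ' := ⟨δ' / 4, by positivity, by ring⟩
  -- near-optimal distributions for the branching problems
  have hex : ∀ j, ∃ q : Fin (r j) → ℝ, (∀ i, 0 ≤ q i) ∧ (∑ i, q i = 1) ∧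
      ((∑ i, q i * (bb j i : ℝ)) ≤ α * ∑ i, q i * (kb j i : ℝ)) ∧
      0 < ∑ i, q i * (kb j i : ℝ) ∧
      RB.KL q (γ j) < (M + δ) * ∑ i, q i * (kb j i : ℝ) := by
    intro j
    obtain ⟨x, ⟨q, hq, hqs, hf, rfl⟩, hx⟩ :=
      exists_lt_of_csInf_lt (hfeas j) (lt_of_le_of_lt (hMj j) (lt_add_of_pos_right M hδ))
    have hpos := RB.mean_coverage_pos hα (hbb j) hq hqs hf
    exact ⟨q, hq, hqs, hf, hpos, (div_lt_iff₀ hpos).1 hx⟩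
  choose q hq hqs hf hpos hKL using hex
  obtain ⟨θ, ⟨hθ1, hθ2⟩, hθ⟩ : ∃ θ : ℝ,
      ((∀ j, ∑ i, q j i * Real.exp (θ * (bb j i - α * (1 + ε / 2) * kb j i)) ≤ 1) ∧
      (∀ j, ∑ i, q j i *
        Real.exp (θ * (Real.log (q j i / γ j i) - (M + 2 * δ) * kb j i)) ≤ 1)) ∧ 0 < θ := by
    refine (Filter.Eventually.and (Filter.Eventually.and
      (Filter.eventually_all.2 fun j => RB.eventually_sum_mul_exp_le_one (hqs j) ?_)
      (Filter.eventually_all.2 fun j => RB.eventually_sum_mul_exp_le_one (hqs j) ?_))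
      (self_mem_nhdsWithin : Set.Ioi (0 : ℝ) ∈ nhdsWithin 0 (Set.Ioi 0))).exists
    · have e : ∑ i, q j i * ((bb j i : ℝ) - α * (1 + ε / 2) * kb j i) =
          ∑ i, q j i * (bb j i : ℝ) - α * (1 + ε / 2) * ∑ i, q j i * (kb j i : ℝ) := by
        rw [Finset.mul_sum, ← Finset.sum_sub_distrib]
        exact Finset.sum_congr rfl fun i _ => by ring
      rw [e]
      have := mul_pos (mul_pos hα hε) (hpos j)
      nlinarith [hf j]
    · have e : ∑ i, q j i * (Real.log (q j i / γ j i) - (M + 2 * δ) * kb j i) =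
          RB.KL (q j) (γ j) - (M + 2 * δ) * ∑ i, q j i * (kb j i : ℝ) := by
        rw [RB.KL, Finset.mul_sum, ← Finset.sum_sub_distrib]
        exact Finset.sum_congr rfl fun i _ => by ring
      rw [e]
      have := mul_pos hδ (hpos j)
      nlinarith [hKL j]
  -- the two constants `C₁, C₂` of the submartingale decay exponentially in `k`
  have hdecay : ∀ u v : ℝ, 0 < u → ∀ᶠ k : ℕ in Filter.atTop,
      Real.exp (-θ * (u * k - v)) ≤ 1 / 4 := by
    intro u v hu
    have ht : Filter.Tendsto (fun k : ℕ => θ * (u * k - v)) Filter.atTop Filter.atTop :=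
      (Filter.tendsto_atTop_add_const_right _ (-v)
        (tendsto_natCast_atTop_atTop.const_mul_atTop hu)).const_mul_atTop hθ
    have ht2 := (Real.tendsto_exp_neg_atTop_nhds_zero.comp ht).eventually
      (ge_mem_nhds (show (0 : ℝ) < 1 / 4 by norm_num))
    filter_upwards [ht2] with k hk
    simpa [neg_mul] using hk
  have hlog : ∀ᶠ k : ℕ in Filter.atTop, Real.log 2 ≤ δ * k :=
    (tendsto_natCast_atTop_atTop.const_mul_atTop hδ).eventually_ge_atTop _
  have hb0 : ∀ k : ℕ, 0 ≤ α * (1 + ε) * (k : ℝ) := fun k => by positivity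
  refine Filter.le_liminf_of_le ?_ ?_
  · refine Filter.IsBoundedUnder.isCoboundedUnder_ge ⟨0, Filter.eventually_map.2 ?_⟩
    filter_upwards [Filter.eventually_gt_atTop 0] with k hk
    have hk' : (0 : ℝ) < k := by exact_mod_cast hk
    refine Real.sInf_nonpos ?_
    rintro x ⟨R, rfl⟩
    refine div_nonpos_of_nonpos_of_nonneg (Real.log_nonpos ?_ ?_) hk'.le
    · exact tsum_nonneg fun l => RB.wordP_nonneg R (fun j i => (hγpos j i).le) _
    · exact RB.PrS_le_one hbb (hb0 k) hk' R (fun j i => (hγpos j i).le) hγsum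
  · filter_upwards [Filter.eventually_gt_atTop 0, hlog,
      hdecay (α * (ε / 2)) (α * (1 + ε / 2) * Km) (by positivity),
      hdecay δ ((M + 2 * δ) * Km) hδ] with k hk hlk hk1 hk2
    have hk' : (0 : ℝ) < k := by exact_mod_cast hk
    refine le_csInf ⟨_, hN'.some, rfl⟩ ?_
    rintro x ⟨R, rfl⟩
    have hmain := RB.start_le_exp_mul_PrS hbb hKm hq hqs hγpos
      (s := α * (1 + ε / 2)) (t := M + 2 * δ) (by positivity) (by positivity) hθ hθ1 hθ2
      (c := (M + 3 * δ) * k) (hb0 k) hk' R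
    have e1 : α * (1 + ε) * (k : ℝ) - α * (1 + ε / 2) * (k + Km) =
        α * (ε / 2) * k - α * (1 + ε / 2) * Km := by ring
    have e2 : (M + 3 * δ) * (k : ℝ) - (M + 2 * δ) * (k + Km) =
        δ * k - (M + 2 * δ) * Km := by ring
    rw [e1, e2] at hmain
    have hhalf : (2 : ℝ)⁻¹ ≤ Real.exp ((M + 3 * δ) * k) *
        RB.PrS bb kb R γ (α * (1 + ε) * (k : ℝ)) (k : ℝ) := by
      norm_num at hk1 hk2 hmain ⊢
      linarith
    have hPpos : 0 < RB.PrS bb kb R γ (α * (1 + ε) * (k : ℝ)) (k : ℝ) :=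
      pos_of_mul_pos_right (lt_of_lt_of_le (by norm_num) hhalf) (Real.exp_pos _).le
    have hl := Real.log_le_log (by norm_num) hhalf
    rw [Real.log_mul (Real.exp_pos _).ne' hPpos.ne', Real.log_exp, Real.log_inv] at hl
    rw [le_div_iff₀ hk']
    have := mul_nonneg (mul_nonneg hM0 hε.le) hk'.le
    nlinarith
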